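/- arXiv:2509.00302 — 2 statements merged into one kernel-verified Lean document; each statement's English description precedes it below -/
import Mathlib

section
/- Let Q be a prime power and let b be a divisor of Q+1 with 1 < b < Q+1. Let s be an odd positive integer and q = Q^{2s}. Then for every integer b' with 0 ≤ b' ≤ b−2, setting r = b − b' and δ = Q + 1 − r, and for all integers t, m with 1 ≤ t < m ≤ (q + ((Q+1)/b − 1)(Q−1)Q^{s})/Q, there exists an optimal (r, δ)-LRC over F_q with parameters [mQ, tr+1, (m−t)Q]_q. Moreover, if Q is odd and b = (Q+1)/2, the same conclusion holds for every positive integer s (not necessarily odd). -/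
/-- The Hamming weight of a vector: the number of nonzero coordinates. -/
def hammingWt {F : Type*} [Zero F] [DecidableEq F] {n : ℕ} (v : Fin n → F) : ℕ :=
  (Finset.univ.filter (fun i => v i ≠ 0)).card

/-- The minimum distance of the linear code `C` is at least `d`. -/
def MinDistGe {F : Type*} [Field F] [DecidableEq F] {n : ℕ}
    (C : Submodule F (Fin n → F)) (d : ℕ) : Prop :=
  ∀ c ∈ C, c ≠ 0 → d ≤ hammingWt c

/-- The minimum distance of the linear code `C` is exactly `d`. -/
def MinDistEq {F : Type*} [Field F] [DecidableEq F] {n : ℕ}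
    (C : Submodule F (Fin n → F)) (d : ℕ) : Prop :=
  MinDistGe C d ∧ ∃ c ∈ C, c ≠ 0 ∧ hammingWt c = d

/-- `C` is an `(r, δ)`-locally repairable code: every coordinate `i` has a repair
group `R` containing `i`, of size at most `r + δ - 1`, such that the punctured code
`C|_R` has minimum distance at least `δ` (i.e. every codeword whose restriction to
`R` is nonzero has at least `δ` nonzero coordinates inside `R`). -/
def IsLRC {F : Type*} [Field F] [DecidableEq F] {n : ℕ}
    (C : Submodule F (Fin n → F)) (r δ : ℕ) : Prop :=
  ∀ i : Fin n, ∃ R : Finset (Fin n), i ∈ R ∧ R.card ≤ r + δ - 1 ∧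
    ∀ c ∈ C, (∃ j ∈ R, c j ≠ 0) → δ ≤ (R.filter (fun j => c j ≠ 0)).card

/-- The parameters `[n, k, d]` attain the Singleton-type bound for `(r, δ)`-LRCs:
`d = n - k + 1 - (⌈k/r⌉ - 1)(δ - 1)`  (here `⌈k/r⌉ = (k + r - 1)/r`). -/
def SingletonOptimal (n k d r δ : ℕ) : Prop :=
  (d : ℤ) = (n : ℤ) - (k : ℤ) + 1 - ((((k + r - 1) / r : ℕ) : ℤ) - 1) * ((δ : ℤ) - 1)

/-- There exists an optimal `(r, δ)`-LRC over `F` with parameters `[n, k, d]`. -/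
def ExistsOptimalLRC (F : Type*) [Field F] [DecidableEq F] (n k d r δ : ℕ) : Prop :=
  ∃ C : Submodule F (Fin n → F),
    Module.finrank F C = k ∧ MinDistEq C d ∧ IsLRC C r δ ∧ SingletonOptimal n k d r δ

open Polynomial

/-!
Put `a = (Q + 1) / b`, let `P = Q ^ s` and let `K` be the subfield of `F` with `P` elements. For a
suitable `c ≠ 0` the code evaluates the polynomials spanned by `y ^ j * x ^ i` (`j < r`, `i < t`)
and `x ^ t` at points of the curve `y ^ Q + y = c * x ^ a`, using `m` fibres of the projection to
`x`, each consisting of `Q` points. Restricted to a fibre, a message is a polynomial in `y` of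
degree less than `r`, which gives the locality. Giving `x` weight `Q` and `y` weight `a` (their pole
orders at infinity), every message has weight at most `t * Q`. The curve is irreducible by
Eisenstein's criterion at `y`, and a nonzero message cannot vanish at all the chosen points, so its
norm to `F[y]` is nonzero; the weight bounds the degree of this norm and hence the number of zeros
of the message on the curve.

To have enough fibres, `c` is chosen so that `c * K` lies in the image `I` of `y ↦ y ^ Q + y`. The
`x` with `c * x ^ a ∈ I` are counted through the pairs `(x, z)` with `x : F`, `z : K` and
`z * c * x ^ a ∈ I`. For fixed `z ≠ 0` their number does not depend on `z`, because every nonzero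
element of `K` is an `a`-th power in `F`; for fixed `x` there are at least `P / Q` of them, and all
`P` when `x ^ a ∈ K`.
-/

section WeightedDegree

variable {ι R : Type*}

lemma mul_natDegree_sum_add_le [Semiring R] {s : Finset ι} {f : ι → R[X]} {a u v : ℕ}
    (hf : ∀ i ∈ s, f i ≠ 0 → a * (f i).natDegree + u ≤ v) (hs : ∑ i ∈ s, f i ≠ 0) :
    a * (∑ i ∈ s, f i).natDegree + u ≤ v := by
  have hlead : ∑ i ∈ s, (f i).coeff (∑ i ∈ s, f i).natDegree ≠ 0 := by
    rwa [← finsetSum_coeff, coeff_natDegree, leadingCoeff_ne_zero]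
  obtain ⟨i, hi, hcoeff⟩ := Finset.exists_ne_zero_of_sum_ne_zero hlead
  have hfi : f i ≠ 0 := fun h ↦ hcoeff (by simp [h])
  exact (Nat.add_le_add_right (Nat.mul_le_mul_left a (le_natDegree_of_ne_zero hcoeff)) u).trans
    (hf i hi hfi)

lemma mul_natDegree_det_le [Fintype ι] [DecidableEq ι] [CommRing R] {M : Matrix ι ι R[X]}
    {a d : ℕ} {u : ι → ℕ} (hM : ∀ i j, M i j ≠ 0 → a * (M i j).natDegree + u i ≤ d + u j) :
    a * M.det.natDegree ≤ Fintype.card ι * d := by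
  rcases eq_or_ne M.det 0 with h0 | h0
  · simp [h0]
  rw [Matrix.det_apply'] at h0 ⊢
  refine mul_natDegree_sum_add_le (u := 0) (fun σ _ hσ ↦ ?_) h0
  have hentry (i : ι) : M (σ i) i ≠ 0 := fun h ↦
    right_ne_zero_of_mul hσ (Finset.prod_eq_zero (Finset.mem_univ i) h)
  have hdeg : ((Equiv.Perm.sign σ : ℤ) * ∏ i, M (σ i) i : R[X]).natDegree ≤
      ∑ i, (M (σ i) i).natDegree := by
    refine natDegree_mul_le.trans ?_
    rw [natDegree_intCast, zero_add]
    exact natDegree_prod_le _ _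
  -- The shifts `u` cancel along every permutation.
  refine (Nat.mul_le_mul_left a hdeg).trans
    (Nat.le_of_add_le_add_right (b := ∑ i, u i) ?_)
  calc a * ∑ i, (M (σ i) i).natDegree + ∑ i, u i
      = ∑ i, (a * (M (σ i) i).natDegree + u (σ i)) := by
        rw [Finset.sum_add_distrib, Finset.mul_sum, Equiv.sum_comp σ u]
    _ ≤ ∑ i, (d + u i) := Finset.sum_le_sum fun i _ ↦ hM _ _ (hentry i)
    _ = Fintype.card ι * d + ∑ i, u i := by simp [Finset.sum_add_distrib]

end WeightedDegree

section Norm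

variable {R S : Type*} [CommRing R] [CommRing S]

lemma repr_gen_pow_of_gen_pow_dim [Algebra R S] {B : PowerBasis R S} {w : R}
    (hB : B.gen ^ B.dim = algebraMap R S w) (i : ℕ) (l : Fin B.dim) :
    B.basis.repr (B.gen ^ i) l = if i % B.dim = l then w ^ (i / B.dim) else 0 := by
  have hpow : B.gen ^ i = w ^ (i / B.dim) • B.basis ⟨i % B.dim, Nat.mod_lt _ l.pos⟩ := by
    rw [B.basis_eq_pow, Algebra.smul_def, map_pow, ← hB, ← pow_mul, ← pow_add, Nat.div_add_mod]
  simp [hpow, -PowerBasis.coe_basis, Finsupp.single_apply, Fin.ext_iff]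

lemma leftMulMatrix_aeval_gen_of_gen_pow_dim [Algebra R S] {B : PowerBasis R S} {w : R}
    (hB : B.gen ^ B.dim = algebraMap R S w) (p : R[X]) (l k : Fin B.dim) :
    Algebra.leftMulMatrix B.basis (aeval B.gen p) l k =
      p.sum fun i c ↦ if (i + k) % B.dim = l then c * w ^ ((i + k) / B.dim) else 0 := by
  rw [Algebra.leftMulMatrix_eq_repr_mul, B.basis_eq_pow, aeval_eq_sum_range,
    sum_over_range _ (by simp), Finset.sum_mul, map_sum, Finsupp.finsetSum_apply]
  refine Finset.sum_congr rfl fun i _ ↦ ?_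
  rw [smul_mul_assoc, ← pow_add, map_smul, Finsupp.smul_apply, repr_gen_pow_of_gen_pow_dim hB,
    smul_eq_mul, mul_ite, mul_zero]

theorem natDegree_norm_aeval_gen_le [Algebra R[X] S] {B : PowerBasis R[X] S} {w : R[X]}
    {n d : ℕ} (hB : B.gen ^ B.dim = algebraMap R[X] S w) (hw : w.natDegree ≤ n) {p : R[X][X]}
    (hp : ∀ i, p.coeff i ≠ 0 → B.dim * (p.coeff i).natDegree + n * i ≤ d) :
    (Algebra.norm R[X] (aeval B.gen p)).natDegree ≤ d := by
  classical
  rw [Algebra.norm_eq_matrix_det B.basis]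
  rcases B.dim.eq_zero_or_pos with h0 | hpos
  · have : IsEmpty (Fin B.dim) := h0 ▸ Fin.isEmpty
    simp
  refine Nat.le_of_mul_le_mul_left ?_ hpos
  conv_rhs => rw [← Fintype.card_fin B.dim]
  refine mul_natDegree_det_le (u := fun i ↦ n * i) fun l k hlk ↦ ?_
  rw [leftMulMatrix_aeval_gen_of_gen_pow_dim hB] at hlk ⊢
  refine mul_natDegree_sum_add_le (fun i _ hi ↦ ?_) hlk
  obtain ⟨hl, hi⟩ := ite_ne_right_iff.1 hi
  have hdeg : (p.coeff i * w ^ ((i + k) / B.dim)).natDegree ≤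
      (p.coeff i).natDegree + (i + k) / B.dim * n :=
    natDegree_mul_le_of_le le_rfl (natDegree_pow_le_of_le _ hw)
  have hdiv : B.dim * ((i + k) / B.dim) + l = i + k := hl ▸ Nat.div_add_mod (i + k) B.dim
  have hpi := hp i (left_ne_zero_of_mul hi)
  simp only [if_pos hl]
  nlinarith [Nat.mul_le_mul_left B.dim hdeg]

end Norm

section Zeros

variable {F : Type*} [Field F]

lemma finiteDimensional_quotient_of_ne_bot {ι S : Type*} [Finite ι] [CommRing S] [IsDomain S]
    [Algebra F S] [Algebra F[X] S] [IsScalarTower F F[X] S] (b : Module.Basis ι F[X] S)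
    {I : Ideal S} (hI : I ≠ ⊥) : FiniteDimensional F (S ⧸ I) :=
  have := Fintype.ofFinite ι
  Module.Finite.equiv (I.quotientEquivDirectSum F b hI).symm

/-- The `R`-point of the affine scheme `P = p = 0` given by a common zero `(x, y)`: evaluation at
`(x, y)` on the coordinate ring. -/
noncomputable def evalAtZero {R : Type*} [CommRing R] {P p : R[X][X]} {x y : R}
    (hP : P.evalEval x y = 0) (hp : p.evalEval x y = 0) :
    (AdjoinRoot P ⧸ Ideal.span {AdjoinRoot.mk P p}) →ₐ[R] R :=
  AlgHom.mk
    (Ideal.Quotient.lift _ (AdjoinRoot.evalEval hP) fun f hf ↦ by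
      obtain ⟨g, rfl⟩ := Ideal.mem_span_singleton'.1 hf
      rw [map_mul, AdjoinRoot.evalEval_mk, hp, mul_zero])
    fun c ↦ (AdjoinRoot.evalEval_mk hP (C (C c))).trans (by rw [evalEval, eval_C, eval_C]; rfl)

lemma evalAtZero_mk {R : Type*} [CommRing R] {P p : R[X][X]} {x y : R}
    (hP : P.evalEval x y = 0) (hp : p.evalEval x y = 0) (f : R[X][X]) :
    evalAtZero hP hp (Ideal.Quotient.mk _ (AdjoinRoot.mk P f)) = f.evalEval x y :=
  AdjoinRoot.evalEval_mk hP f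

theorem card_le_natDegree_norm_mk {P p : F[X][X]} (hP : P.Monic) [IsDomain (AdjoinRoot P)]
    (hp : AdjoinRoot.mk P p ≠ 0) {Z : Finset (F × F)}
    (hPZ : ∀ z ∈ Z, P.evalEval z.1 z.2 = 0) (hpZ : ∀ z ∈ Z, p.evalEval z.1 z.2 = 0) :
    Z.card ≤ (Algebra.norm F[X] (AdjoinRoot.mk P p)).natDegree := by
  let b := (AdjoinRoot.powerBasis' hP).basis
  have : FiniteDimensional F (AdjoinRoot P ⧸ Ideal.span {AdjoinRoot.mk P p}) :=
    finiteDimensional_quotient_of_ne_bot b (mt Ideal.span_singleton_eq_bot.1 hp)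
  let point (z : Z) := evalAtZero (hPZ z z.2) (hpZ z z.2)
  have hinj : Function.Injective point := fun z z' h ↦ by
    have heval (f : F[X][X]) : f.evalEval z.1.1 z.1.2 = f.evalEval z'.1.1 z'.1.2 := by
      rw [← evalAtZero_mk (hPZ z z.2) (hpZ z z.2), ← evalAtZero_mk (hPZ z' z'.2) (hpZ z' z'.2)]
      exact DFunLike.congr_fun h _
    have hfst := heval (C X)
    have hsnd := heval X
    simp only [evalEval, eval_C, eval_X] at hfst hsnd
    exact Subtype.ext (Prod.ext hfst hsnd)
  rw [← finrank_quotient_span_eq_natDegree_norm b hp, ← Nat.card_eq_finsetCard Z]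
  exact (Nat.card_le_card_of_injective point hinj).trans (card_algHom_le_finrank ..)

lemma prime_X_pow_sub_C {a : ℕ} (ha : 0 < a) {w : F[X]} (h0 : w.coeff 0 = 0)
    (h1 : w.coeff 1 ≠ 0) : Prime (X ^ a - C w : F[X][X]) := by
  have hmonic : (X ^ a - C w : F[X][X]).Monic := monic_X_pow_sub_C w ha.ne'
  have hprime : (Ideal.span {(X : F[X])}).IsPrime :=
    (Ideal.span_singleton_prime X_ne_zero).2 prime_X
  refine (IsEisensteinAt.irreducible (𝓟 := Ideal.span {(X : F[X])}) ?_ hprime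
    hmonic.isPrimitive (by rwa [natDegree_X_pow_sub_C])).prime
  refine hmonic.isEisensteinAt_of_mem_of_notMem hprime.ne_top (fun {i} hi ↦ ?_) ?_
  · rw [natDegree_X_pow_sub_C] at hi
    rcases eq_or_ne i 0 with rfl | hi0
    · simpa [coeff_X_pow, ha.ne, Ideal.mem_span_singleton, X_dvd_iff]
    · simp [coeff_X_pow, hi.ne, coeff_C_of_ne_zero hi0]
  · simpa [coeff_X_pow, ha.ne, Ideal.span_singleton_pow, Ideal.mem_span_singleton, X_pow_dvd_iff]
      using ⟨1, le_rfl, h1⟩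

theorem card_zeros_on_curve_le {a n d : ℕ} (ha : 0 < a) {w : F[X]} (hw : w.natDegree ≤ n)
    (hprime : Prime (X ^ a - C w : F[X][X])) {p : F[X][X]} (hdvd : ¬ X ^ a - C w ∣ p)
    (hp : ∀ i, p.coeff i ≠ 0 → a * (p.coeff i).natDegree + n * i ≤ d) {Z : Finset (F × F)}
    (hwZ : ∀ z ∈ Z, w.eval z.1 = z.2 ^ a) (hpZ : ∀ z ∈ Z, p.evalEval z.1 z.2 = 0) :
    Z.card ≤ d := by
  have hmonic : (X ^ a - C w : F[X][X]).Monic := monic_X_pow_sub_C w ha.ne'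
  have : IsDomain (AdjoinRoot (X ^ a - C w)) := AdjoinRoot.isDomain_of_prime hprime
  have hdim : (AdjoinRoot.powerBasis' hmonic).dim = a := natDegree_X_pow_sub_C
  refine (card_le_natDegree_norm_mk hmonic (mt AdjoinRoot.mk_eq_zero.1 hdvd)
    (fun z hz ↦ by simp [evalEval, hwZ z hz]) hpZ).trans ?_
  rw [← AdjoinRoot.aeval_eq, ← AdjoinRoot.powerBasis'_gen hmonic]
  refine natDegree_norm_aeval_gen_le ?_ hw (hdim.symm ▸ hp)
  rw [hdim, AdjoinRoot.powerBasis'_gen, AdjoinRoot.algebraMap_eq, ← sub_eq_zero,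
    ← AdjoinRoot.mk_X, ← AdjoinRoot.mk_C, ← map_pow, ← map_sub, AdjoinRoot.mk_self]

end Zeros

section Messages

/-- The monomial basis of `R[y][x]`; its vector of index `(j, i)` is `y ^ j * x ^ i`. -/
noncomputable def bivariateMonomials (R : Type*) [CommSemiring R] :
    Module.Basis (ℕ × ℕ) R R[X][X] :=
  (basisMonomials R).smulTower (basisMonomials R[X])

lemma bivariateMonomials_repr {R : Type*} [CommSemiring R] (p : R[X][X]) (j i : ℕ) :
    (bivariateMonomials R).repr p (j, i) = (p.coeff i).coeff j :=
  Module.Basis.smulTower_repr_mk ..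

/-- The exponents `(j, i)` of the monomials `y ^ j * x ^ i` spanning the message space: those with
`j < r` and `i < t`, together with that of `x ^ t`. -/
def messageExponents (t r : ℕ) : Finset (ℕ × ℕ) :=
  insert (0, t) (Finset.range r ×ˢ Finset.range t)

lemma card_messageExponents (t r : ℕ) : (messageExponents t r).card = t * r + 1 := by
  rw [messageExponents, Finset.card_insert_of_notMem (by simp), Finset.card_product,
    Finset.card_range, Finset.card_range, mul_comm]

/-- The message space of the code: the span in `R[y][x]` of the monomials with exponents in
`messageExponents t r`. -/
noncomputable def messages (R : Type*) [CommSemiring R] (t r : ℕ) : Submodule R R[X][X] :=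
  .span R (bivariateMonomials R '' messageExponents t r)

lemma finrank_messages (R : Type*) [CommRing R] [Nontrivial R] (t r : ℕ) :
    Module.finrank R (messages R t r) = t * r + 1 := by
  classical
  rw [messages, ← Finset.coe_image, finrank_span_finset_eq_card,
    Finset.card_image_of_injective _ (bivariateMonomials R).injective, card_messageExponents]
  rw [Finset.coe_image]
  exact ((bivariateMonomials R).linearIndependent.linearIndepOn _).id_image

variable {R : Type*} [CommSemiring R] {t r : ℕ} {p : R[X][X]}

lemma mem_messages :
    p ∈ messages R t r ↔ ∀ i j, (p.coeff i).coeff j ≠ 0 → j = 0 ∧ i = t ∨ j < r ∧ i < t := by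
  rw [messages, Module.Basis.mem_span_image]
  simp only [Set.subset_def, Finset.mem_coe, Finsupp.mem_support_iff, Prod.forall,
    bivariateMonomials_repr, messageExponents, Finset.mem_insert, Finset.mem_product,
    Finset.mem_range, Prod.mk.injEq]
  exact forall_comm

lemma natDegree_le_of_mem_messages (hp : p ∈ messages R t r) :
    p.natDegree ≤ t := by
  refine natDegree_le_iff_coeff_eq_zero.2 fun i hi ↦ ?_
  ext j
  by_contra h
  rcases mem_messages.1 hp i j h with h | h <;> omega

lemma degree_eval_C_lt_of_mem_messages (hr : 0 < r) (hp : p ∈ messages R t r) (x : R) :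
    (p.eval (C x)).degree < r := by
  rw [degree_lt_iff_coeff_zero]
  intro j hj
  rw [eval_eq_sum, Polynomial.sum, finsetSum_coeff]
  refine Finset.sum_eq_zero fun i _ ↦ ?_
  rw [← C_pow, coeff_mul_C]
  have : (p.coeff i).coeff j = 0 := by
    by_contra h
    rcases mem_messages.1 hp i j h with h | h <;> omega
  rw [this, zero_mul]

lemma mul_natDegree_coeff_add_le_of_mem_messages {a n : ℕ} (har : a * r ≤ n + a)
    (hp : p ∈ messages R t r) {i : ℕ} (hi : p.coeff i ≠ 0) :
    a * (p.coeff i).natDegree + n * i ≤ n * t := by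
  rcases mem_messages.1 hp i _ (leadingCoeff_ne_zero.2 hi) with ⟨hj, rfl⟩ | ⟨hj, hit⟩
  · rw [hj, mul_zero, zero_add]
  · nlinarith

lemma map_C_mem_messages (hr : 0 < r) {g : R[X]} (hg : g.natDegree ≤ t) :
    g.map C ∈ messages R t r := by
  refine mem_messages.2 fun i j hij ↦ ?_
  obtain ⟨rfl, hi⟩ : j = 0 ∧ g.coeff i ≠ 0 := by simpa [coeff_C] using hij
  rcases ((le_natDegree_of_ne_zero hi).trans hg).eq_or_lt with h | h <;> simp [h, hr]

end Messages

section GridCode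

variable {m n t r : ℕ}

/-- Evaluation of bivariate polynomials on a grid of `m` fibres with `n` points each, the `l`-th
point of the `k`-th fibre being `y = β k l`, `x = α k`. -/
noncomputable def gridEval {R : Type*} [CommSemiring R] (α : Fin m → R)
    (β : Fin m → Fin n → R) : R[X][X] →ₗ[R] (Fin (m * n) → R) where
  toFun p e := p.evalEval (β (finProdFinEquiv.symm e).1 (finProdFinEquiv.symm e).2)
    (α (finProdFinEquiv.symm e).1)
  map_add' _ _ := funext fun _ ↦ evalEval_add ..
  map_smul' _ _ := funext fun _ ↦ by simp [evalEval]

lemma gridEval_apply {R : Type*} [CommSemiring R] (α : Fin m → R) (β : Fin m → Fin n → R)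
    (p : R[X][X]) (k : Fin m) (l : Fin n) :
    gridEval α β p (finProdFinEquiv (k, l)) = p.evalEval (β k l) (α k) := by
  simp only [gridEval, LinearMap.coe_mk, AddHom.coe_mk, Equiv.symm_apply_apply]

lemma hammingWt_gridEval {R : Type*} [CommSemiring R] [DecidableEq R] (α : Fin m → R)
    (β : Fin m → Fin n → R) (p : R[X][X]) :
    hammingWt (gridEval α β p) =
      (Finset.univ.filter fun z : Fin m × Fin n ↦ p.evalEval (β z.1 z.2) (α z.1) ≠ 0).card :=
  .symm <| Finset.card_equiv finProdFinEquiv fun _ ↦ by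
    rw [Finset.mem_filter_univ, Finset.mem_filter_univ, gridEval_apply]

section Domain

variable {R ι : Type*} [CommRing R] [IsDomain R] [Fintype ι]

lemma card_filter_eval_eq_zero_le_natDegree [DecidableEq R] {f : R[X]} (hf : f ≠ 0)
    (β : ι ↪ R) :
    (Finset.univ.filter fun l ↦ f.eval (β l) = 0).card ≤ f.natDegree := by
  rw [← Finset.card_map β]
  refine Polynomial.card_le_degree_of_subset_roots fun x hx ↦ ?_
  obtain ⟨l, hl, rfl⟩ := Finset.mem_map.1 hx
  simpa [hf] using hl

lemma card_lt_card_filter_eval_ne_zero_add [DecidableEq R] {f : R[X]} (hf : f ≠ 0)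
    (hdeg : f.degree < r) (β : ι ↪ R) :
    Fintype.card ι < (Finset.univ.filter fun l ↦ f.eval (β l) ≠ 0).card + r := by
  have hzeros := card_filter_eval_eq_zero_le_natDegree hf β
  have := (natDegree_lt_iff_degree_lt hf).2 hdeg
  have := Finset.card_filter_add_card_filter_not (s := .univ) (fun l ↦ f.eval (β l) = 0)
  rw [Finset.card_univ] at this
  simp only [ne_eq]
  omega

lemma eq_zero_of_evalEval_grid_eq_zero {α : Fin m ↪ R} {β : Fin m → Fin n ↪ R}
    {p : R[X][X]} (hdeg : p.natDegree < m) (hfibre : ∀ x, (p.eval (C x)).degree < n)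
    (hp : ∀ k l, p.evalEval (β k l) (α k) = 0) : p = 0 := by
  have hzero (k : Fin m) : p.eval (C (α k)) = 0 := by
    by_contra h
    refine h (eq_zero_of_natDegree_lt_card_of_eval_eq_zero _ (β k).injective (hp k) ?_)
    rw [Fintype.card_fin]
    exact (natDegree_lt_iff_degree_lt h).2 (hfibre _)
  refine eq_zero_of_natDegree_lt_card_of_eval_eq_zero p (C_injective.comp α.injective) hzero ?_
  rwa [Fintype.card_fin]

lemma eq_zero_of_mem_messages_of_grid (htm : t < m) (hr : 0 < r) (hrn : r ≤ n)
    {α : Fin m ↪ R} {β : Fin m → Fin n ↪ R} {p : R[X][X]} (hp : p ∈ messages R t r)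
    (hzero : ∀ k l, p.evalEval (β k l) (α k) = 0) : p = 0 :=
  eq_zero_of_evalEval_grid_eq_zero ((natDegree_le_of_mem_messages hp).trans_lt htm)
    (fun x ↦ (degree_eval_C_lt_of_mem_messages hr hp x).trans_le (Nat.cast_le.2 hrn)) hzero

lemma exists_mem_messages_hammingWt_eq [DecidableEq R] (htm : t < m) (hr : 0 < r) (α : Fin m ↪ R)
    (β : Fin m → Fin n → R) :
    ∃ p ∈ messages R t r, hammingWt (gridEval α β p) = (m - t) * n := by
  let g : R[X] := ∏ k : Fin t, (X - C (α (k.castLE htm.le)))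
  have hg : g.natDegree ≤ t := (natDegree_prod_le _ _).trans (by simp)
  have hroot (k : Fin m) : g.eval (α k) = 0 ↔ (k : ℕ) < t := by
    simp only [g, eval_prod, Finset.prod_eq_zero_iff, eval_sub, eval_X, eval_C, sub_eq_zero,
      α.injective.eq_iff, Finset.mem_univ, true_and]
    exact ⟨fun ⟨i, hi⟩ ↦ hi ▸ i.2, fun hk ↦ ⟨⟨k, hk⟩, rfl⟩⟩
  have hsupport : (Finset.univ.filter fun z : Fin m × Fin n ↦
      (g.map C).evalEval (β z.1 z.2) (α z.1) ≠ 0) =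
        (Finset.univ.filter fun k : Fin m ↦ ¬ (k : ℕ) < t) ×ˢ Finset.univ := by
    ext z
    simp [evalEval, eval_map, eval₂_at_apply, hroot]
  have hcount := Finset.card_filter_add_card_filter_not (s := .univ) fun k : Fin m ↦ (k : ℕ) < t
  rw [Fin.card_filter_val_lt, min_eq_right htm.le, Finset.card_fin] at hcount
  refine ⟨_, map_C_mem_messages hr hg, ?_⟩
  rw [hammingWt_gridEval, hsupport, Finset.card_product, Finset.card_fin]
  congr 1
  omega

lemma finrank_map_gridEval (htm : t < m) (hr : 0 < r) (hrn : r ≤ n) (α : Fin m ↪ R)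
    (β : Fin m → Fin n ↪ R) :
    Module.finrank R ((messages R t r).map (gridEval α fun k ↦ β k)) = t * r + 1 := by
  rw [← LinearMap.range_domRestrict, LinearMap.finrank_range_of_inj, finrank_messages]
  exact (injective_iff_map_eq_zero _).2 fun p hp ↦ Subtype.ext <|
    eq_zero_of_mem_messages_of_grid htm hr hrn p.2 fun k l ↦
      (gridEval_apply α (fun k ↦ β k) p.1 k l).symm.trans (congrFun hp _)

end Domain

variable {F : Type*} [Field F] [DecidableEq F]

lemma isLRC_map_gridEval (hr : 0 < r) (hrn : r ≤ n) (α : Fin m → F)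
    (β : Fin m → Fin n ↪ F) :
    IsLRC ((messages F t r).map (gridEval α fun k ↦ β k)) r (n + 1 - r) := by
  intro e
  obtain ⟨⟨k, l⟩, rfl⟩ := finProdFinEquiv.surjective e
  let fibre : Fin n ↪ Fin (m * n) :=
    ⟨fun l ↦ finProdFinEquiv (k, l), fun l l' h ↦ by simpa using h⟩
  refine ⟨Finset.univ.map fibre, Finset.mem_map_of_mem fibre (Finset.mem_univ l), ?_, ?_⟩
  · rw [Finset.card_map, Finset.card_fin]
    omega
  rintro _ ⟨p, hp, rfl⟩ ⟨e, he, hpe⟩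
  have hfibre (l : Fin n) :
      gridEval α (fun k ↦ β k) p (fibre l) = (p.eval (C (α k))).eval (β k l) :=
    gridEval_apply _ _ p k l
  obtain ⟨l', -, rfl⟩ := Finset.mem_map.1 he
  rw [hfibre] at hpe
  have hcount := card_lt_card_filter_eval_ne_zero_add (fun h ↦ hpe (by rw [h, eval_zero]))
    (degree_eval_C_lt_of_mem_messages hr hp (α k)) (β k)
  rw [Fintype.card_fin] at hcount
  simp only [Finset.filter_map, Finset.card_map, Function.comp_def, hfibre]
  omega

variable {α : Fin m ↪ F} {β : Fin m → Fin n ↪ F}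

lemma le_hammingWt_gridEval (htm : t < m) (hr : 0 < r) (hrn : r ≤ n) {a : ℕ} (ha : 0 < a)
    (har : a * r ≤ n + a) {w : F[X]} (hw : w.natDegree ≤ n)
    (hprime : Prime (X ^ a - C w : F[X][X])) (hcurve : ∀ k l, w.eval (β k l) = α k ^ a)
    {p : F[X][X]} (hp : p ∈ messages F t r) (hp0 : p ≠ 0) :
    (m - t) * n ≤ hammingWt (gridEval α (fun k ↦ β k) p) := by
  let point : Fin m × Fin n ↪ F × F := ⟨fun z ↦ (β z.1 z.2, α z.1), fun z z' h ↦ by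
    obtain ⟨hβ, hα⟩ := Prod.mk.inj h
    have hk := α.injective hα
    exact Prod.ext hk ((β z'.1).injective (hk ▸ hβ))⟩
  have hdvd : ¬ X ^ a - C w ∣ p := by
    rintro ⟨g, rfl⟩
    exact hp0 <| eq_zero_of_mem_messages_of_grid (α := α) (β := β) htm hr hrn hp fun k l ↦ by
      simp [evalEval, hcurve]
  have hzeros := card_zeros_on_curve_le ha hw hprime hdvd
    (fun i ↦ mul_natDegree_coeff_add_le_of_mem_messages har hp)
    (Z := (Finset.univ.filter fun z ↦ p.evalEval (β z.1 z.2) (α z.1) = 0).map point)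
    (Finset.forall_mem_map.2 fun _ _ ↦ hcurve _ _)
    (Finset.forall_mem_map.2 fun _ hz ↦ (Finset.mem_filter.1 hz).2)
  rw [Finset.card_map] at hzeros
  have htotal := Finset.card_filter_add_card_filter_not (s := .univ)
    fun z : Fin m × Fin n ↦ p.evalEval (β z.1 z.2) (α z.1) = 0
  rw [Finset.card_univ, Fintype.card_prod, Fintype.card_fin, Fintype.card_fin] at htotal
  rw [hammingWt_gridEval, Nat.sub_mul, mul_comm t]
  simp only [ne_eq]
  omega

lemma singletonOptimal_grid (htm : t < m) (hr : 0 < r) (hrn : r ≤ n) :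
    SingletonOptimal (m * n) (t * r + 1) ((m - t) * n) r (n + 1 - r) := by
  have hceil : (t * r + 1 + r - 1) / r = t + 1 := by
    rw [add_right_comm, Nat.add_sub_cancel, Nat.add_div_right _ hr, Nat.mul_div_cancel _ hr]
  rw [SingletonOptimal, hceil]
  push_cast [htm.le, hrn.trans n.le_succ]
  ring

theorem existsOptimalLRC_of_curve (htm : t < m) (hr : 0 < r) (hrn : r ≤ n) {a : ℕ} (ha : 0 < a)
    (har : a * r ≤ n + a) {w : F[X]} (hw : w.natDegree ≤ n) (h0 : w.coeff 0 = 0)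
    (h1 : w.coeff 1 ≠ 0) (hcurve : ∀ k l, w.eval (β k l) = α k ^ a) :
    ExistsOptimalLRC F (m * n) (t * r + 1) ((m - t) * n) r (n + 1 - r) := by
  refine ⟨(messages F t r).map (gridEval α fun k ↦ β k), finrank_map_gridEval htm hr hrn α β,
    ⟨?_, ?_⟩, isLRC_map_gridEval hr hrn α β, singletonOptimal_grid htm hr hrn⟩
  · rintro _ ⟨p, hp, rfl⟩ hpc
    exact le_hammingWt_gridEval htm hr hrn ha har hw (prime_X_pow_sub_C ha h0 h1) hcurve hp
      fun h ↦ hpc (by rw [h, map_zero])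
  · obtain ⟨p, hp, hwt⟩ := exists_mem_messages_hammingWt_eq htm hr α fun k ↦ β k
    refine ⟨_, Submodule.mem_map_of_mem hp, fun h ↦ ?_, hwt⟩
    have hpos : 0 < (m - t) * n := Nat.mul_pos (Nat.sub_pos_of_lt htm) (hr.trans_le hrn)
    rw [← hwt, h] at hpos
    simp [hammingWt] at hpos

end GridCode

section RootCount

variable {F : Type*} [Field F] [Finite F]

lemma card_roots_of_dvd_X_pow_card_sub_X {f : F[X]} (hf : f ∣ X ^ Nat.card F - X) :
    Nat.card {x // f.eval x = 0} = f.natDegree := by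
  classical
  have := Fintype.ofFinite F
  have h0 : (X ^ Nat.card F - X : F[X]) ≠ 0 :=
    FiniteField.X_pow_card_sub_X_ne_zero F Finite.one_lt_card
  have hnodup : f.roots.Nodup := Multiset.nodup_of_le (roots.le_of_dvd h0 hf) <| by
    rw [Nat.card_eq_fintype_card, FiniteField.roots_X_pow_card_sub_X]
    exact Finset.univ.nodup
  rw [(splits_X_pow_nat_card_sub_X.of_dvd h0 hf).natDegree_eq_card_roots,
    ← Multiset.toFinset_card_of_nodup hnodup, ← Nat.card_eq_finsetCard]
  exact Nat.card_congr <| .subtypeEquivRight fun x ↦ by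
    rw [Multiset.mem_toFinset, mem_roots (ne_zero_of_dvd_ne_zero h0 hf), IsRoot.def]

lemma card_pow_succ_eq_mul {n k : ℕ} (hF : Nat.card F = n * k + 1) {u : F} (hu : u ^ k = 1) :
    Nat.card {x : F // x ^ (n + 1) = u * x} = n + 1 := by
  have hn : 0 < n := Nat.pos_of_ne_zero fun h ↦ by
    simpa [hF, h] using Finite.one_lt_card (α := F)
  have hdvd : X * (X ^ n - C u) ∣ X ^ Nat.card F - X := by
    have := mul_dvd_mul_left X (sub_dvd_pow_sub_pow (X ^ n) (C u) k)
    rwa [← pow_mul, ← C_pow, hu, C_1, mul_sub X (X ^ (n * k)), mul_one, ← pow_succ', ← hF] at this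
  have hdeg : (X * (X ^ n - C u)).natDegree = n + 1 := by
    rw [natDegree_X_mul (X_pow_sub_C_ne_zero hn u), natDegree_X_pow_sub_C]
  refine .trans (Nat.card_congr <| .subtypeEquivRight fun x ↦ ?_)
    ((card_roots_of_dvd_X_pow_card_sub_X hdvd).trans hdeg)
  rw [eval_mul, eval_X, eval_sub, eval_pow, eval_X, eval_C, mul_sub, ← pow_succ', mul_comm x u,
    sub_eq_zero]

end RootCount

section PointCount

lemma card_le_index_mul_card_comap {G H : Type*} [AddGroup G] [AddGroup H] (I : AddSubgroup H)
    [I.FiniteIndex] (f : G →+ H) : Nat.card G ≤ I.index * Nat.card (I.comap f) := by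
  rw [← (I.comap f).index_mul_card, AddSubgroup.index_comap]
  refine Nat.mul_le_mul_right _ ?_
  rw [← I.relIndex_top_right]
  refine AddSubgroup.relIndex_le_of_le_right le_top ?_
  rw [I.relIndex_top_right]
  exact I.index_ne_zero_of_finite

variable {K L : Type*} [Field K] [Field L] [Algebra K L]

lemma mem_range_algebraMap_of_pow_card_eq [Finite K] {y : L} (hy : y ^ Nat.card K = y) :
    y ∈ (algebraMap K L).range :=
  splits_X_pow_nat_card_sub_X.mem_range_of_isRoot
    (FiniteField.X_pow_card_sub_X_ne_zero K Finite.one_lt_card) (by simp [hy])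

variable [Finite L]

lemma exists_ne_zero_pow_eq_algebraMap {a : ℕ} (ha : a ∣ (Nat.card L - 1) / (Nat.card K - 1))
    {z : K} (hz : z ≠ 0) : ∃ w : L, w ≠ 0 ∧ w ^ a = algebraMap K L z := by
  obtain ⟨k, hk⟩ := ha
  obtain ⟨w, rfl⟩ := FiniteField.norm_surjective K L z
  refine ⟨w ^ k, pow_ne_zero k fun h ↦ hz (h ▸ Algebra.norm_zero), ?_⟩
  rw [FiniteField.algebraMap_norm_eq_pow, hk, ← pow_mul, mul_comm]

variable {I : AddSubgroup L} {c : L} {a : ℕ}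

lemma card_smul_mul_pow_mem (ha : a ∣ (Nat.card L - 1) / (Nat.card K - 1)) {z : K} (hz : z ≠ 0) :
    Nat.card {x // z • (c * x ^ a) ∈ I} = Nat.card {x // c * x ^ a ∈ I} := by
  obtain ⟨w, hw0, hw⟩ := exists_ne_zero_pow_eq_algebraMap ha hz
  refine Nat.card_congr <| (Equiv.mulLeft₀ w hw0).subtypeEquiv fun x ↦ ?_
  rw [Equiv.mulLeft₀_apply, mul_pow, hw, Algebra.smul_def, mul_left_comm]

theorem sum_card_smul_mul_pow_mem [Fintype L] (ha : a ∣ (Nat.card L - 1) / (Nat.card K - 1)) :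
    ∑ x : L, Nat.card {z : K // z • (c * x ^ a) ∈ I} =
      Nat.card L + (Nat.card K - 1) * Nat.card {x // c * x ^ a ∈ I} := by
  classical
  have := Fintype.ofInjective _ (algebraMap K L).injective
  have hswap : ∑ x : L, Nat.card {z : K // z • (c * x ^ a) ∈ I} =
      ∑ z : K, Nat.card {x : L // z • (c * x ^ a) ∈ I} := by
    simp only [Nat.card_eq_fintype_card, Fintype.card_subtype]
    exact Finset.sum_card_bipartiteAbove_eq_sum_card_bipartiteBelow _
  rw [hswap, ← Finset.add_sum_erase _ _ (Finset.mem_univ 0),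
    Finset.sum_congr rfl fun z hz ↦ card_smul_mul_pow_mem ha (Finset.ne_of_mem_erase hz)]
  simp [Finset.card_erase_of_mem, Nat.card_eq_fintype_card, I.zero_mem]

lemma le_card_pow_mem_range (hL : Nat.card L = Nat.card K ^ 2) (ha : a ∣ Nat.card K + 1) :
    a * (Nat.card K - 1) + 1 ≤ Nat.card {x : L // x ^ a ∈ (algebraMap K L).range} := by
  have : Finite K := .of_injective _ (algebraMap K L).injective
  have ha0 : 0 < a := Nat.pos_of_dvd_of_pos ha (Nat.succ_pos _)
  obtain ⟨k, hk⟩ := ha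
  have hK := Finite.one_lt_card (α := K)
  have hF : Nat.card L = a * (Nat.card K - 1) * k + 1 := by
    obtain ⟨P, hP⟩ := Nat.exists_eq_add_of_lt hK
    rw [hL, mul_right_comm, ← hk, hP, Nat.add_sub_cancel]
    ring
  rw [← card_pow_succ_eq_mul hF (one_pow k)]
  have hmem (x : L) (hx : x ^ (a * (Nat.card K - 1) + 1) = 1 * x) :
      x ^ a ∈ (algebraMap K L).range := by
    refine mem_range_algebraMap_of_pow_card_eq ?_
    calc (x ^ a) ^ Nat.card K = x ^ (a * (Nat.card K - 1) + 1) * x ^ (a - 1) := by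
          rw [← pow_mul, ← pow_add, add_assoc, Nat.add_sub_cancel' ha0, Nat.mul_sub_one,
            Nat.sub_add_cancel (Nat.le_mul_of_pos_right a hK.le)]
      _ = x ^ a := by rw [hx, one_mul, mul_pow_sub_one ha0.ne']
  exact Nat.card_le_card_of_injective _ (Subtype.impEmbedding _ _ hmem).injective

lemma card_add_le_index_mul_card_smul_mem [DecidablePred (· ∈ (algebraMap K L).range)]
    (hc : ∀ z : K, z • c ∈ I) (y : L) :
    Nat.card K + (if y ∈ (algebraMap K L).range then (I.index - 1) * Nat.card K else 0) ≤
      I.index * Nat.card {z : K // z • (c * y) ∈ I} := by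
  split_ifs with hy
  · obtain ⟨u, rfl⟩ := hy
    have hall (z : K) : z • (c * algebraMap K L u) ∈ I := by
      rw [mul_comm, ← Algebra.smul_def, smul_smul]
      exact hc _
    rw [Nat.card_congr (Equiv.subtypeUnivEquiv hall), ← one_add_mul,
      Nat.add_sub_of_le (Nat.one_le_iff_ne_zero.2 I.index_ne_zero_of_finite)]
  · exact card_le_index_mul_card_comap I (LinearMap.toSpanSingleton K L (c * y)).toAddMonoidHom

theorem card_sq_add_le_index_mul_card (hL : Nat.card L = Nat.card K ^ 2) (hc : ∀ z : K, z • c ∈ I)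
    (ha : a ∣ Nat.card K + 1) :
    Nat.card K ^ 2 + (a - 1) * (I.index - 1) * Nat.card K ≤
      I.index * Nat.card {x // c * x ^ a ∈ I} := by
  classical
  have := Fintype.ofFinite L
  have : Finite K := .of_injective _ (algebraMap K L).injective
  have hK := Finite.one_lt_card (α := K)
  have ha' : a ∣ (Nat.card L - 1) / (Nat.card K - 1) := by
    have hfactor : Nat.card L - 1 = (Nat.card K + 1) * (Nat.card K - 1) := by
      rw [hL, ← Nat.sq_sub_sq, one_pow]
    rwa [hfactor, Nat.mul_div_cancel _ (Nat.sub_pos_of_lt hK)]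
  have hsum := Finset.sum_le_sum fun x (_ : x ∈ Finset.univ) ↦
    card_add_le_index_mul_card_smul_mem hc (x ^ a)
  rw [← Finset.mul_sum, sum_card_smul_mul_pow_mem ha', Finset.sum_add_distrib, ← Finset.sum_filter,
    Finset.sum_const, Finset.sum_const, Finset.card_univ, ← Fintype.card_subtype,
    ← Nat.card_eq_fintype_card, ← Nat.card_eq_fintype_card, smul_eq_mul, smul_eq_mul, hL] at hsum
  have hgood := Nat.mul_le_mul_right ((I.index - 1) * Nat.card K) (le_card_pow_mem_range hL ha)
  obtain ⟨P, hP⟩ := Nat.exists_eq_add_one.2 (zero_lt_one.trans hK)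
  obtain ⟨j, hj⟩ := Nat.exists_eq_add_one.2 (Nat.pos_of_ne_zero I.index_ne_zero_of_finite)
  obtain ⟨e, rfl⟩ := Nat.exists_eq_add_one.2 (Nat.pos_of_dvd_of_pos ha (Nat.succ_pos _))
  rw [hP, hj] at hsum hgood ⊢
  simp only [Nat.add_sub_cancel] at hsum hgood ⊢
  refine Nat.le_of_mul_le_mul_left ?_ (show 0 < P by omega)
  nlinarith

end PointCount

section IdAdd

lemma exists_ringHom_forall_eq_pow {F : Type*} [Field F] [Finite F] {Q n : ℕ}
    (hF : Nat.card F = Q ^ n) (hn : n ≠ 0) :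
    ∃ φ : F →+* F, ∀ x, φ x = x ^ Q := by
  have := Fintype.ofFinite F
  obtain ⟨p, _, k, hp, hk⟩ := FiniteField.card' F
  have := Fact.mk hp
  rw [Nat.card_eq_fintype_card, hk] at hF
  obtain ⟨j, -, rfl⟩ := (Nat.dvd_prime_pow hp).1 (hF ▸ dvd_pow_self Q hn)
  exact ⟨iterateFrobenius F p j, iterateFrobenius_def p j⟩

/-- The additive map `y ↦ y + φ y`. When `φ` is the `Q`-power map it is the left-hand side
`y ^ Q + y` of the equation of the curve. -/
def idAdd {R : Type*} [NonAssocSemiring R] (φ : R →+* R) : R →+ R :=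
  .id R + φ.toAddMonoidHom

section CommRing

variable {R : Type*} [CommRing R] {φ : R →+* R} {Q : ℕ}

lemma idAdd_apply (hφ : ∀ x, φ x = x ^ Q) (y : R) : idAdd φ y = y ^ Q + y := by
  rw [← hφ, add_comm]
  rfl

lemma pow_apply_eq_pow_pow (hφ : ∀ x, φ x = x ^ Q) (s : ℕ) (x : R) : (φ ^ s) x = x ^ Q ^ s := by
  rw [RingHom.coe_pow, show ⇑φ = (· ^ Q) from funext hφ, pow_iterate]

lemma sub_neg_one_pow_mul_mem_range_idAdd (hφ : ∀ x, φ x = x ^ Q) (s : ℕ) (v : R) :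
    v - (-1) ^ s * v ^ Q ^ s ∈ (idAdd φ).range := by
  induction s with
  | zero => simp
  | succ s ih =>
    have hstep : idAdd φ ((-1) ^ s * v ^ Q ^ s) =
        (-1) ^ s * v ^ Q ^ s + (-1) ^ s * v ^ Q ^ (s + 1) := by
      rw [idAdd_apply hφ, ← hφ, map_mul, map_pow, map_neg, map_one, hφ, ← pow_mul, ← pow_succ,
        add_comm]
    convert add_mem ih ⟨_, hstep⟩ using 1
    ring

end CommRing

variable {F : Type*} [Field F] [Finite F] {φ : F →+* F} {Q s : ℕ}

lemma exists_ne_zero_mul_mem_range_idAdd (hφ : ∀ x, φ x = x ^ Q) (hQ : 1 < Q) (hs : s ≠ 0)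
    (hF : Q ^ s < Nat.card F) : ∃ c ≠ 0, ∀ z, z ^ Q ^ s = z → z * c ∈ (idAdd φ).range := by
  -- `1 - (-φ) ^ s = (1 + φ) * ∑ i < s, (-φ) ^ i` is linear over the fixed field of `φ ^ s`, so any
  -- nonzero value of it serves as `c`.
  let f : F[X] := X - C ((-1) ^ s) * X ^ Q ^ s
  have hP : 1 < Q ^ s := Nat.one_lt_pow hs hQ
  have hf : f ≠ 0 := fun h ↦ by
    simpa [f, coeff_C_mul, coeff_X_pow, hP.ne, -map_pow] using congrArg (coeff · 1) h
  have hdeg : f.natDegree ≤ Q ^ s :=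
    natDegree_sub_le_of_le (natDegree_X_le.trans hP.le) (natDegree_C_mul_X_pow_le ..) |>.trans
      (max_self _).le
  obtain ⟨v, hv⟩ := exists_eval_ne_zero_of_natDegree_lt_card f hf <| by
    rw [← Nat.cast_card]
    exact_mod_cast hdeg.trans_lt hF
  refine ⟨f.eval v, hv, fun z hz ↦ ?_⟩
  convert sub_neg_one_pow_mul_mem_range_idAdd hφ s (z * v) using 1
  simp only [f, eval_sub, eval_mul, eval_X, eval_pow, eval_C, mul_pow, hz]
  ring

lemma card_ker_idAdd (hφ : ∀ x, φ x = x ^ Q) (hQ : 1 < Q) (hF : Nat.card F = Q ^ (2 * s)) :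
    Nat.card (idAdd φ).ker = Q := by
  have hneg : (-1 : F) ^ (Q + 1) = 1 := by
    rw [pow_succ, ← hφ, map_neg, map_one, neg_mul_neg, one_mul]
  obtain ⟨k, hk⟩ : Q ^ 2 - 1 ∣ Q ^ (2 * s) - 1 := by
    simpa only [pow_mul, one_pow] using Nat.sub_dvd_pow_sub_pow (Q ^ 2) 1 s
  have hcard : Nat.card F = (Q - 1) * ((Q + 1) * k) + 1 := by
    rw [← mul_assoc, mul_comm (Q - 1), ← Nat.sq_sub_sq, one_pow, ← hk, hF,
      Nat.sub_add_cancel (Nat.one_le_pow _ _ (zero_lt_one.trans hQ))]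
  have hroots := card_pow_succ_eq_mul hcard (u := -1) (by rw [pow_mul, hneg, one_pow])
  rw [Nat.sub_add_cancel hQ.le] at hroots
  refine .trans (Nat.card_congr <| .subtypeEquivRight fun x ↦ ?_) hroots
  rw [AddMonoidHom.mem_ker, idAdd_apply hφ, neg_one_mul, eq_neg_iff_add_eq_zero]

lemma card_fibre_idAdd (hφ : ∀ x, φ x = x ^ Q) (hQ : 1 < Q) (hF : Nat.card F = Q ^ (2 * s))
    {z : F} (hz : z ∈ (idAdd φ).range) : Nat.card {y // idAdd φ y = z} = Q := by
  obtain ⟨y₀, rfl⟩ := hz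
  refine .trans (Nat.card_congr <| (Equiv.subRight y₀).subtypeEquiv fun y ↦ ?_)
    (card_ker_idAdd hφ hQ hF)
  rw [AddMonoidHom.mem_ker, Equiv.subRight_apply, map_sub, sub_eq_zero]

theorem exists_le_mul_card_mul_pow_mem_range_idAdd (hφ : ∀ x, φ x = x ^ Q) (hQ : 1 < Q)
    (hs : s ≠ 0) (hF : Nat.card F = Q ^ (2 * s)) {a : ℕ} (ha : a ∣ Q ^ s + 1) :
    ∃ c ≠ 0, Q ^ (2 * s) + (a - 1) * (Q - 1) * Q ^ s ≤
      Q * Nat.card {x // c * x ^ a ∈ (idAdd φ).range} := by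
  have hF' : Nat.card F = (Q ^ s) ^ 2 := by rw [hF, mul_comm, pow_mul]
  have hP : 1 < Q ^ s := Nat.one_lt_pow hs hQ
  obtain ⟨c, hc0, hc⟩ := exists_ne_zero_mul_mem_range_idAdd hφ hQ hs
    (hF'.symm ▸ lt_self_pow₀ hP one_lt_two)
  let K := (φ ^ s).eqLocusField (RingHom.id F)
  have hfix (x : F) : x ∈ K ↔ x ^ Q ^ s = 1 * x := by
    rw [RingHom.mem_eqLocusField, pow_apply_eq_pow_pow hφ, RingHom.id_apply, one_mul]
  have hK : Nat.card K = Q ^ s := by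
    have hcard : Nat.card F = (Q ^ s - 1) * (Q ^ s + 1) + 1 := by
      rw [mul_comm, ← Nat.sq_sub_sq, one_pow, hF',
        Nat.sub_add_cancel (Nat.one_le_pow _ _ (zero_lt_one.trans hP))]
    have := card_pow_succ_eq_mul hcard (one_pow _)
    rw [Nat.sub_add_cancel hP.le] at this
    exact (Nat.card_congr <| .subtypeEquivRight hfix).trans this
  have hindex : (idAdd φ).range.index = Q := by
    rw [AddSubgroup.index_range, card_ker_idAdd hφ hQ hF]
  have hbound := card_sq_add_le_index_mul_card (K := K) (I := (idAdd φ).range) (c := c)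
    (by rw [hK, hF']) (fun z ↦ hc z (((hfix z).1 z.2).trans (one_mul _))) (hK.symm ▸ ha)
  rw [hK, hindex, ← hF', hF] at hbound
  exact ⟨c, hc0, hbound⟩

end IdAdd

theorem existsOptimalLRC_of_dvd_pow_add_one {F : Type*} [Field F] [Finite F] [DecidableEq F]
    {Q s a r t m : ℕ} (hQ : 1 < Q) (hs : s ≠ 0) (hF : Nat.card F = Q ^ (2 * s))
    (ha : a ∣ Q ^ s + 1) (hr : 0 < r) (hrQ : r ≤ Q) (har : a * r ≤ Q + a) (htm : t < m)
    (hm : m * Q ≤ Q ^ (2 * s) + (a - 1) * (Q - 1) * Q ^ s) :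
    ExistsOptimalLRC F (m * Q) (t * r + 1) ((m - t) * Q) r (Q + 1 - r) := by
  obtain ⟨φ, hφ⟩ := exists_ringHom_forall_eq_pow hF (by omega)
  obtain ⟨c, hc0, hc⟩ := exists_le_mul_card_mul_pow_mem_range_idAdd hφ hQ hs hF ha
  have hcard : m ≤ Nat.card {x // c * x ^ a ∈ (idAdd φ).range} :=
    Nat.le_of_mul_le_mul_left (mul_comm m Q ▸ hm.trans hc) (zero_lt_one.trans hQ)
  let x : Fin m ↪ {x // c * x ^ a ∈ (idAdd φ).range} :=
    (Fin.castLEEmb hcard).trans (Finite.equivFin _).symm.toEmbedding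
  let y (k : Fin m) : Fin Q ≃ {y // idAdd φ y = c * x k ^ a} :=
    (Finite.equivFinOfCardEq (card_fibre_idAdd hφ hQ hF (x k).2)).symm
  refine existsOptimalLRC_of_curve (α := x.trans (.subtype _))
    (β := fun k ↦ (y k).toEmbedding.trans (.subtype _)) (w := C c⁻¹ * (X ^ Q + X)) htm hr hrQ
    (Nat.pos_of_dvd_of_pos ha (Nat.succ_pos _)) har ?_ ?_ ?_ fun k l ↦ ?_
  · exact (natDegree_C_mul_le _ _).trans (natDegree_add_le_of_degree_le (natDegree_X_pow_le Q)
      (natDegree_X_le.trans hQ.le))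
  · simp [(zero_lt_one.trans hQ).ne]
  · simpa [coeff_X_pow, hQ.ne] using hc0
  · have hy : (y k l : F) ^ Q + y k l = c * x k ^ a := (idAdd_apply hφ _).symm.trans (y k l).2
    calc (C c⁻¹ * (X ^ Q + X)).eval (y k l : F) = c⁻¹ * (y k l ^ Q + y k l) := by simp
      _ = x k ^ a := by rw [hy, inv_mul_cancel_left₀ hc0]

lemma dvd_pow_add_one_of_mul_eq {Q a b s : ℕ} (hb : 0 < b) (hab : a * b = Q + 1)
    (hs : Odd s ∨ (Odd Q ∧ 2 * b = Q + 1)) : a ∣ Q ^ s + 1 := by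
  rcases hs with hs | ⟨hQ, hb2⟩
  · exact (Dvd.intro b hab).trans (by simpa using hs.nat_add_dvd_pow_add_pow Q 1)
  · obtain rfl : a = 2 := Nat.eq_of_mul_eq_mul_right hb (hab.trans hb2.symm)
    exact hQ.pow.add_one.two_dvd

/-- Let `Q` be a prime power, `b ∣ Q+1` with `1 < b < Q+1`, `s` a
positive integer which is odd (or, alternatively, `Q` is odd and `b = (Q+1)/2`),
and `q = Q^(2s)`. For `0 ≤ b' ≤ b-2`, `r = b - b'`, `δ = Q + 1 - r`, and all
`1 ≤ t < m ≤ (q + ((Q+1)/b - 1)(Q-1)Q^s)/Q`, there exists an optimal `(r, δ)`-LRC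
with parameters `[mQ, tr+1, (m-t)Q]_q`. -/
theorem stmt_13 (Q : ℕ) (hQ : IsPrimePow Q)
    (b : ℕ) (hb1 : 1 < b) (hb2 : b < Q + 1) (hbdvd : b ∣ Q + 1)
    (s : ℕ) (hs : 0 < s) (hcase : Odd s ∨ (Odd Q ∧ 2 * b = Q + 1))
    (q : ℕ) (hq : q = Q ^ (2 * s))
    (b' : ℕ) (hb' : b' ≤ b - 2)
    (r δ : ℕ) (hr : r = b - b') (hδ : δ = Q + 1 - r)
    (t m : ℕ) (ht : 1 ≤ t) (htm : t < m)
    (hm : (m : ℚ) ≤ ((q : ℚ) + (((Q : ℚ) + 1) / (b : ℚ) - 1) * ((Q : ℚ) - 1) * (Q : ℚ) ^ s)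
        / (Q : ℚ))
    (F : Type*) [Field F] [Fintype F] [DecidableEq F] (hF : Fintype.card F = q) :
    ExistsOptimalLRC F (m * Q) (t * r + 1) ((m - t) * Q) r δ := by
  subst hδ hq
  obtain ⟨a, hab⟩ := hbdvd
  have hQ1 : 1 < Q := hQ.one_lt
  have hb0 : 0 < b := zero_lt_one.trans hb1
  have ha : 0 < a := Nat.pos_of_dvd_of_pos (Dvd.intro_left b hab.symm) Q.succ_pos
  have hdiv : ((Q : ℚ) + 1) / b = a := by
    rw [div_eq_iff (by positivity), mul_comm]
    exact_mod_cast hab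
  have hm' : m * Q ≤ Q ^ (2 * s) + (a - 1) * (Q - 1) * Q ^ s := by
    rw [hdiv, le_div_iff₀ (by positivity)] at hm
    zify [ha, hQ1.le]
    exact_mod_cast hm
  have har : a * r ≤ Q + a :=
    calc a * r ≤ a * b := Nat.mul_le_mul_left a (hr ▸ Nat.sub_le b b')
      _ ≤ Q + a := by rw [mul_comm, ← hab]; omega
  exact existsOptimalLRC_of_dvd_pow_add_one hQ1 hs.ne' (Nat.card_eq_fintype_card.trans hF)
    (dvd_pow_add_one_of_mul_eq hb0 (by rw [mul_comm, hab]) hcase) (by omega) (by omega) har htm hm'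
end

section
/- Let Q be a prime power, let b be a positive divisor of Q+1, let s be an odd positive integer, and let q = Q^{2s}. Then the number of pairs (α, β) ∈ F_q × F_q satisfying β^{(Q+1)/b} = α^{Q} + α equals q + ((Q+1)/b − 1)(Q−1)Q^{s}; that is, the superelliptic curve y^{(Q+1)/b} = x^{Q} + x is a maximal curve over F_q, attaining the Hasse–Weil upper bound q + 1 + 2g√q with genus g = ((Q+1)/b − 1)(Q−1)/2 (the curve has exactly one rational point at infinity). -/
/-!
Let `ψ` be a primitive additive character of `F` invariant under all automorphisms of `F`, and let
`S n a = ∑ x, ψ (a * x ^ n)`. As `ψ (t * α ^ Q) = ψ (τ * α)` when `τ ^ Q = t`, orthogonality of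
characters expresses the number of points as the sum of `S m t` over the `Q` solutions of
`t ^ Q = -t`.

For such `t ≠ 0` and `u` not a `(Q + 1)`-st power, the form `t * u * β ^ (Q + 1)` is nondegenerate,
so `S (Q + 1) (t * u) ^ 2 = q`; as `S (Q + 1) (t * u) ≡ 1` modulo `Q + 1`, its value is `(-Q) ^ s`.
Averaging `S (Q + 1) (t * u ^ m)` over `u` determines `S m t` from this constant and
`S (Q + 1) t`, and the case `m = 1`, where `S 1 t = 0`, determines `S (Q + 1) t`.
-/

open Finset

section CyclicGroup

variable {G : Type*} [CommGroup G] [IsCyclic G] {n k : ℕ}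

lemma range_powMonoidHom_eq_ker [Finite G] (h : n * k = Nat.card G) :
    (powMonoidHom n : G →* G).range = (powMonoidHom k).ker := by
  have hn : 0 < n := Nat.pos_of_mul_pos_right (h ▸ Nat.card_pos)
  refine Subgroup.eq_of_le_of_card_ge ?_ ?_
  · rintro _ ⟨z, rfl⟩
    simp [MonoidHom.mem_ker, ← pow_mul, h]
  · rw [IsCyclic.card_powMonoidHom_ker, IsCyclic.card_powMonoidHom_range, ← h,
      Nat.gcd_mul_left_left, Nat.gcd_mul_right_left, Nat.mul_div_cancel_left k hn]

lemma exists_pow_eq_iff_pow_eq_one [Finite G] (h : n * k = Nat.card G) {x : G} :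
    (∃ z, z ^ n = x) ↔ x ^ k = 1 :=
  SetLike.ext_iff.1 (range_powMonoidHom_eq_ker h) x

lemma exists_pow_eq_of_pow_eq_one [Finite G] (h : n * k ∣ Nat.card G) {x : G} (hx : x ^ k = 1) :
    ∃ z, z ^ n = x := by
  obtain ⟨j, hj⟩ := h
  rw [exists_pow_eq_iff_pow_eq_one (k := k * j) (by rw [hj, mul_assoc]), pow_mul, hx, one_pow]

variable [Fintype G] [DecidableEq G]

lemma card_filter_pow_eq_pow (h : n ∣ Nat.card G) (z : G) : #{x : G | x ^ n = z ^ n} = n := by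
  have hfiber : #{x : G | x ^ n = z ^ n} = #{x : G | x ^ n = 1} :=
    MonoidHom.card_fiber_eq_of_mem_range (powMonoidHom n : G →* G) ⟨z, rfl⟩ ⟨1, one_pow n⟩
  rw [hfiber, ← Nat.subtype_card (p := (· ∈ (powMonoidHom n : G →* G).ker)) _
    (by simp [MonoidHom.mem_ker]), IsCyclic.card_powMonoidHom_ker, Nat.gcd_eq_right h]

lemma card_filter_pow_eq_one (h : n ∣ Nat.card G) : #{x : G | x ^ n = 1} = n := by
  simpa only [one_pow] using card_filter_pow_eq_pow h 1

lemma sum_comp_pow {A : Type*} [AddCommMonoid A] (h : n ∣ Nat.card G) (φ : G → A) :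
    ∑ x, φ (x ^ n) = n • ∑ y ∈ univ.image (· ^ n), φ y := by
  rw [sum_comp φ (· ^ n), smul_sum]
  refine sum_congr rfl fun y hy ↦ ?_
  obtain ⟨z, -, rfl⟩ := mem_image.1 hy
  rw [card_filter_pow_eq_pow h]

end CyclicGroup

section Integrality

lemma isIntegral_addChar {A R : Type*} [AddGroup A] [Finite A] [CommRing R] (ψ : AddChar A R)
    (x : A) : IsIntegral ℤ (ψ x) := by
  refine IsIntegral.of_pow (addOrderOf_pos x) ?_
  rw [← AddChar.map_nsmul_eq_pow, addOrderOf_nsmul_eq_zero, AddChar.map_zero_eq_one]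
  exact isIntegral_one

lemma int_dvd_of_cast_eq_mul {K : Type*} [Field K] [CharZero K] {n z : ℤ} {w : K}
    (hw : IsIntegral ℤ w) (h : (z : K) = n * w) : n ∣ z := by
  obtain rfl | hn := eq_or_ne n 0
  · simpa using h
  have hn' : (n : K) ≠ 0 := Int.cast_ne_zero.2 hn
  obtain ⟨k, rfl⟩ := hw.exists_int_iff_exists_rat.1
    ⟨z / n, by rw [Rat.cast_div, Rat.cast_intCast, Rat.cast_intCast, h, mul_div_cancel_left₀ w hn']⟩
  exact ⟨k, mod_cast h⟩

lemma eq_neg_pow_of_sq_eq {K : Type*} [Field K] [CharZero K] {Q s : ℕ} (hQ : 1 < Q) {x w : K}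
    (hsq : x ^ 2 = (Q : K) ^ (2 * s)) (hw : IsIntegral ℤ w) (hx : x = 1 + (Q + 1 : ℕ) * w) :
    x = (-Q) ^ s := by
  have hsq' : x ^ 2 = ((-Q) ^ s) ^ 2 := by
    rw [hsq, pow_mul, ← neg_sq, ← pow_mul, ← pow_mul, mul_comm]
  refine (sq_eq_sq_iff_eq_or_eq_neg.1 hsq').resolve_right fun hneg ↦ ?_
  have hdvd₁ : (Q + 1 : ℤ) ∣ -(-Q) ^ s - 1 := by
    refine int_dvd_of_cast_eq_mul hw ?_
    push_cast at hx ⊢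
    linear_combination hx - hneg
  have hdvd₂ : (Q + 1 : ℤ) ∣ (-Q) ^ s - 1 := by
    rw [← neg_dvd, neg_add']
    exact sub_one_dvd_pow_sub_one (-Q : ℤ) s
  have hdvd : (Q + 1 : ℤ) ∣ 2 := by
    rw [← dvd_neg]
    convert dvd_add hdvd₁ hdvd₂ using 1
    ring
  have := Int.le_of_dvd two_pos hdvd
  lia

end Integrality

/-- The character sum `∑ x, ψ (a * x ^ n)` attached to the monomial `a * x ^ n`; for `n` dividing
the order of the unit group of a finite field it is a Gaussian period up to normalization. -/
def weilSum {R R' : Type*} [CommRing R] [Fintype R] [CommRing R'] (ψ : AddChar R R') (n : ℕ)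
    (a : R) : R' :=
  ∑ x, ψ (a * x ^ n)

section Ring

variable {R R' : Type*} [CommRing R] [Fintype R] [CommRing R'] {ψ : AddChar R R'}

lemma weilSum_zero_right (n : ℕ) : weilSum ψ n 0 = Fintype.card R := by
  simp [weilSum]

lemma weilSum_mul_pow (n : ℕ) (a : R) (z : Rˣ) : weilSum ψ n (a * z ^ n) = weilSum ψ n a :=
  Fintype.sum_equiv z.mulLeft _ _ fun x ↦ by
    rw [Units.mulLeft_apply, mul_pow, mul_assoc]

variable [IsDomain R']

lemma weilSum_one (hψ : ψ.IsPrimitive) {a : R} (ha : a ≠ 0) : weilSum ψ 1 a = 0 := by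
  classical
  simpa [weilSum, ha, mul_comm a] using AddChar.sum_mulShift a hψ

lemma sum_addChar_mul_map_add_mul [DecidableEq R] (hψ : ψ.IsPrimitive) (σ : R ≃+* R)
    (hσ : ∀ x, ψ (σ x) = ψ x) (c d : R) :
    ∑ y, ψ (c * σ y + d * y) = if c + σ d = 0 then (Fintype.card R : R') else 0 := by
  obtain ⟨c, rfl⟩ := σ.surjective c
  have hterm (y : R) : ψ (σ c * σ y + d * y) = ψ (y * (c + d)) := by
    rw [AddChar.map_add_eq_mul, ← map_mul σ, hσ, ← AddChar.map_add_eq_mul]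
    ring_nf
  simp_rw [hterm, AddChar.sum_mulShift _ hψ, ← map_add, map_eq_zero_iff σ σ.injective, Nat.cast_ite,
    Nat.cast_zero]

lemma sum_mul_sum_neg_eq_card (hψ : ψ.IsPrimitive) (σ : R ≃+* R) (hσ : ∀ x, ψ (σ x) = ψ x) {a : R}
    (ha : ∀ δ, a * δ + σ (a * σ δ) = 0 → δ = 0) :
    (∑ x, ψ (a * (σ x * x))) * ∑ y, ψ (-a * (σ y * y)) = Fintype.card R := by
  classical
  have hshift (y : R) : ∑ x, ψ (a * (σ x * x)) * ψ (-a * (σ y * y)) =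
      ∑ δ, ψ (a * (σ δ * δ)) * ψ (a * δ * σ y + a * σ δ * y) := by
    refine (Fintype.sum_equiv (Equiv.addRight y) _ _ fun δ ↦ ?_).symm
    rw [← AddChar.map_add_eq_mul, ← AddChar.map_add_eq_mul, Equiv.coe_addRight, map_add σ]
    ring_nf
  rw [sum_mul_sum, sum_comm]
  simp_rw [hshift]
  rw [sum_comm]
  simp_rw [← mul_sum, sum_addChar_mul_map_add_mul hψ σ hσ]
  rw [sum_eq_single_of_mem 0 (mem_univ _) fun δ _ hδ ↦ by rw [if_neg (mt (ha δ) hδ), mul_zero]]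
  simp

lemma card_filter_pow_eq_map_add [DecidableEq R] [CharZero R'] (hψ : ψ.IsPrimitive) (σ : R ≃+* R)
    (hσ : ∀ x, ψ (σ x) = ψ x) (m : ℕ) :
    (#{p : R × R | p.2 ^ m = σ p.1 + p.1} : R') = ∑ t with σ t = -t, weilSum ψ m t := by
  have hcard : (Fintype.card R : R') ≠ 0 := Nat.cast_ne_zero.2 Fintype.card_ne_zero
  refine mul_left_cancel₀ hcard ?_
  calc (Fintype.card R : R') * #{p : R × R | p.2 ^ m = σ p.1 + p.1}
    _ = ∑ p : R × R, ∑ t, ψ (t * (p.2 ^ m - (σ p.1 + p.1))) := by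
      simp_rw [AddChar.sum_mulShift _ hψ, sub_eq_zero, Nat.cast_ite, Nat.cast_zero]
      rw [← sum_filter, sum_const, nsmul_eq_mul, mul_comm]
    _ = ∑ t, (∑ x, ψ (-t * σ x + -t * x)) * weilSum ψ m t := by
      rw [sum_comm]
      refine sum_congr rfl fun t _ ↦ ?_
      rw [weilSum, sum_mul_sum, Fintype.sum_prod_type]
      refine sum_congr rfl fun x _ ↦ sum_congr rfl fun y _ ↦ ?_
      rw [← AddChar.map_add_eq_mul]
      ring_nf
    _ = Fintype.card R * ∑ t with σ t = -t, weilSum ψ m t := by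
      have hiff (t : R) : -t + σ (-t) = 0 ↔ σ t = -t := by
        rw [map_neg, ← neg_add, neg_eq_zero, add_comm, add_eq_zero_iff_eq_neg]
      simp_rw [sum_addChar_mul_map_add_mul hψ σ hσ, hiff, ite_mul, zero_mul]
      rw [← sum_filter, mul_sum]

end Ring

section Field

variable {F : Type*} [Field F] [Fintype F]

lemma sum_eq_add_sum_units [DecidableEq F] {A : Type*} [AddCommMonoid A] (f : F → A) :
    ∑ x, f x = f 0 + ∑ u : Fˣ, f u := by
  rw [Fintype.sum_eq_add_sum_subtype_ne f 0]
  congr 1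
  exact (Fintype.sum_equiv unitsEquivNeZero _ _ fun _ ↦ rfl).symm

section Averaging

variable {R' : Type*} [CommRing R'] {ψ : AddChar F R'}

lemma weilSum_eq_one_add_sum_units [DecidableEq F] {n : ℕ} (hn : n ≠ 0) (a : F) :
    weilSum ψ n a = 1 + ∑ u : Fˣ, ψ (a * (u : F) ^ n) := by
  rw [weilSum, sum_eq_add_sum_units, zero_pow hn, mul_zero, AddChar.map_zero_eq_one]

lemma exists_isIntegral_weilSum_eq {n : ℕ} (hn : n ∣ Nat.card Fˣ) (a : F) :
    ∃ w, IsIntegral ℤ w ∧ weilSum ψ n a = 1 + n * w := by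
  classical
  have hn₀ : n ≠ 0 := ne_zero_of_dvd_ne_zero Nat.card_pos.ne' hn
  refine ⟨∑ v ∈ univ.image fun u : Fˣ ↦ u ^ n, ψ (a * v),
    IsIntegral.sum _ fun _ _ ↦ isIntegral_addChar ψ _, ?_⟩
  rw [weilSum_eq_one_add_sum_units hn₀, ← nsmul_eq_mul,
    ← sum_comp_pow hn fun v : Fˣ ↦ ψ (a * v)]
  simp_rw [Units.val_pow_eq_pow_val]

lemma sum_units_weilSum_mul_pow [DecidableEq F] {m b : ℕ} (hm : m ≠ 0) (hb : b ≠ 0) (t : F) :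
    ∑ u : Fˣ, weilSum ψ (m * b) (t * (u : F) ^ m) = Nat.card Fˣ * weilSum ψ m t := by
  have hshift (v : Fˣ) : ∑ u : Fˣ, ψ (t * (u : F) ^ m * (v : F) ^ (m * b)) =
      ∑ u : Fˣ, ψ (t * (u : F) ^ m) :=
    Fintype.sum_equiv (Equiv.mulRight (v ^ b)) _ _ fun u ↦ by
      rw [Equiv.coe_mulRight, Units.val_mul, Units.val_pow_eq_pow_val, mul_pow, ← pow_mul,
        mul_comm b, mul_assoc]
  simp_rw [weilSum_eq_one_add_sum_units (mul_ne_zero hm hb), sum_add_distrib]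
  rw [sum_comm]
  simp_rw [hshift]
  simp [weilSum_eq_one_add_sum_units hm, mul_add]

variable [IsDomain R'] [CharZero R'] {n : ℕ} {t : F} {c : R'}

lemma natCast_mul_weilSum_of_forall_not_pow (hn : n ∣ Nat.card Fˣ)
    (hc : ∀ u : Fˣ, (¬∃ z, z ^ n = u) → weilSum ψ n (t * u) = c) {m b : ℕ} (hmb : m * b = n) :
    b * weilSum ψ m t = weilSum ψ n t + (b - 1) * c := by
  classical
  obtain ⟨k, hk⟩ := hn
  have hcard : m * k * b = Nat.card Fˣ := by rw [hk, ← hmb]; ring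
  have hpos : m * k * b ≠ 0 := hcard ▸ Nat.card_pos.ne'
  have hmk : m * k ≠ 0 := left_ne_zero_of_mul hpos
  have hm : m ≠ 0 := left_ne_zero_of_mul hmk
  have hb : b ≠ 0 := right_ne_zero_of_mul hpos
  have hterm (u : Fˣ) : weilSum ψ (m * b) (t * (u : F) ^ m) =
      c + if u ^ (m * k) = 1 then weilSum ψ n t - c else 0 := by
    rw [hmb, pow_mul, ← Units.val_pow_eq_pow_val]
    split_ifs with hu
    · obtain ⟨z, hz⟩ := (exists_pow_eq_iff_pow_eq_one hk.symm).2 hu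
      rw [← hz, Units.val_pow_eq_pow_val, weilSum_mul_pow, add_sub_cancel]
    · rw [hc _ ((exists_pow_eq_iff_pow_eq_one hk.symm).not.2 hu), add_zero]
  have havg := sum_units_weilSum_mul_pow (ψ := ψ) hm hb t
  simp_rw [hterm, sum_add_distrib] at havg
  rw [← sum_filter, sum_const, sum_const, card_filter_pow_eq_one ⟨b, hcard.symm⟩, card_univ,
    ← Nat.card_eq_fintype_card, ← hcard, nsmul_eq_mul, nsmul_eq_mul] at havg
  refine mul_left_cancel₀ (Nat.cast_ne_zero.2 hmk : ((m * k : ℕ) : R') ≠ 0) ?_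
  rw [Nat.cast_mul (m * k) b] at havg
  linear_combination -havg

lemma weilSum_of_forall_not_pow (hψ : ψ.IsPrimitive) (ht : t ≠ 0) (hn : n ∣ Nat.card Fˣ)
    (hc : ∀ u : Fˣ, (¬∃ z, z ^ n = u) → weilSum ψ n (t * u) = c) {m : ℕ} (hm : m ∣ n) :
    weilSum ψ m t = (1 - m) * c := by
  obtain ⟨b, hmb⟩ := hm
  have hb : (b : R') ≠ 0 := by
    rintro h
    rw [Nat.cast_eq_zero.1 h, mul_zero] at hmb
    exact Nat.card_pos.ne' (zero_dvd_iff.1 (hmb ▸ hn))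
  have hone := natCast_mul_weilSum_of_forall_not_pow hn hc (one_mul n)
  rw [weilSum_one hψ ht] at hone
  have hmb' : (n : R') = m * b := by rw [hmb, Nat.cast_mul]
  refine mul_left_cancel₀ hb ?_
  linear_combination natCast_mul_weilSum_of_forall_not_pow hn hc hmb.symm - hone - c * hmb'

end Averaging

lemma exists_addChar_isPrimitive_forall_map_eq (F : Type*) [Field F] [Finite F] :
    ∃ ψ : AddChar F ℂ, ψ.IsPrimitive ∧ ∀ (σ : F ≃+* F) (x : F), ψ (σ x) = ψ x := by
  let p := ringChar F
  have : Fact p.Prime := ⟨CharP.char_is_prime F p⟩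
  let _ : Algebra (ZMod p) F := ZMod.algebra F p
  let ψ : AddChar F ℂ :=
    ZMod.stdAddChar.compAddMonoidHom (Algebra.trace (ZMod p) F).toAddMonoidHom
  refine ⟨ψ, AddChar.IsPrimitive.of_ne_one (AddChar.ne_one_iff.2 ?_), fun σ x ↦ ?_⟩
  · obtain ⟨b, hb⟩ := FiniteField.trace_to_zmod_nondegenerate F one_ne_zero
    rw [one_mul] at hb
    exact ⟨b, fun h ↦ hb (ZMod.injective_stdAddChar (h.trans (AddChar.map_zero_eq_one _).symm))⟩
  · let e : F ≃ₐ[ZMod p] F := AlgEquiv.ofRingEquiv (f := σ) fun x ↦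
      DFunLike.congr_fun (RingHom.ext_zmod ((σ : F →+* F).comp (algebraMap (ZMod p) F)) _) x
    exact congrArg ZMod.stdAddChar (Algebra.trace_eq_of_algEquiv e x)

lemma exists_ringEquiv_forall_eq_pow {Q n : ℕ} (h : Fintype.card F = Q ^ n) :
    ∃ σ : F ≃+* F, ∀ x, σ x = x ^ Q := by
  have hn : n ≠ 0 := by
    rintro rfl
    exact Fintype.one_lt_card.ne' h
  have hQ : IsPrimePow Q := (isPrimePow_pow_iff hn).1 (h ▸ FiniteField.isPrimePow_card F)
  obtain ⟨p, k, hp, -, rfl⟩ := (isPrimePow_nat_iff _).1 hQ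
  have : Fact p.Prime := ⟨hp⟩
  have : CharP F p := charP_of_card_eq_prime_pow (h.trans (pow_mul p k n).symm)
  exact ⟨iterateFrobeniusEquiv F p k, iterateFrobeniusEquiv_def F p k⟩

section Frobenius

variable {Q s : ℕ}

lemma one_lt_of_card_eq_pow {n : ℕ} (h : Fintype.card F = Q ^ n) : 1 < Q :=
  lt_of_pow_lt_pow_left₀ n Q.zero_le (by rw [one_pow, ← h]; exact Fintype.one_lt_card)

lemma add_one_mul_sub_one_dvd_card_units (h : Fintype.card F = Q ^ (2 * s)) :
    (Q + 1) * (Q - 1) ∣ Nat.card Fˣ := by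
  rw [Nat.card_units, Nat.card_eq_fintype_card, h, ← Nat.sq_sub_sq, one_pow]
  exact Nat.pow_sub_one_dvd_pow_sub_one Q (dvd_mul_right 2 s)

lemma neg_one_pow_eq_neg_one_of_card {n : ℕ} (h : Fintype.card F = Q ^ n) : (-1 : Fˣ) ^ Q = -1 := by
  obtain ⟨σ, hσ⟩ := exists_ringEquiv_forall_eq_pow h
  ext
  simpa using (hσ (-1)).symm

lemma weilSum_add_one_neg {R' : Type*} [CommRing R'] {ψ : AddChar F R'}
    (h : Fintype.card F = Q ^ (2 * s)) (a : F) :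
    weilSum ψ (Q + 1) (-a) = weilSum ψ (Q + 1) a := by
  have hone : (-1 : Fˣ) ^ (Q - 1) = 1 := by
    rw [pow_sub _ (one_lt_of_card_eq_pow h).le, neg_one_pow_eq_neg_one_of_card h, pow_one,
      mul_inv_cancel]
  obtain ⟨z, hz⟩ := exists_pow_eq_of_pow_eq_one (add_one_mul_sub_one_dvd_card_units h) hone
  rw [← weilSum_mul_pow (Q + 1) a z, ← Units.val_pow_eq_pow_val, hz, Units.val_neg, Units.val_one,
    mul_neg_one]

lemma eq_zero_of_mul_add_pow_eq_zero (h : Fintype.card F = Q ^ (2 * s)) {t δ : F} (ht : t ≠ 0)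
    (htQ : t ^ Q = -t) {u : Fˣ} (hu : ¬∃ z, z ^ (Q + 1) = u)
    (hδ : t * u * δ + (t * u * δ ^ Q) ^ Q = 0) : δ = 0 := by
  by_contra hδ₀
  lift δ to Fˣ using IsUnit.mk0 δ hδ₀
  lift t to Fˣ using IsUnit.mk0 t ht
  have hfixed : (u * δ ^ (Q + 1)) ^ Q = u * δ ^ (Q + 1) := by
    refine mul_left_cancel (a := t) (Units.ext ?_)
    push_cast
    linear_combination (-(δ : F) ^ Q) * hδ + (u : F) ^ Q * (δ : F) ^ (Q * Q + Q) * htQ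
  have hone : (u * δ ^ (Q + 1)) ^ (Q - 1) = 1 := by
    rw [pow_sub _ (one_lt_of_card_eq_pow h).le, hfixed, pow_one, mul_inv_cancel]
  obtain ⟨z, hz⟩ := exists_pow_eq_of_pow_eq_one (add_one_mul_sub_one_dvd_card_units h) hone
  exact hu ⟨z * δ⁻¹, by rw [mul_pow, hz, inv_pow, mul_inv_cancel_right]⟩

variable {K : Type*} [Field K] [CharZero K] {ψ : AddChar F K}

lemma weilSum_add_one_of_not_pow (hψ : ψ.IsPrimitive) (hψσ : ∀ (σ : F ≃+* F) x, ψ (σ x) = ψ x)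
    (h : Fintype.card F = Q ^ (2 * s)) {t : F} (ht : t ≠ 0) (htQ : t ^ Q = -t) {u : Fˣ}
    (hu : ¬∃ z, z ^ (Q + 1) = u) : weilSum ψ (Q + 1) (t * u) = (-Q) ^ s := by
  classical
  obtain ⟨σ, hσ⟩ := exists_ringEquiv_forall_eq_pow h
  have hsq : weilSum ψ (Q + 1) (t * u) ^ 2 = (Q : K) ^ (2 * s) := by
    have hmul := sum_mul_sum_neg_eq_card hψ σ (hψσ σ) (a := t * u) fun δ hδ ↦
      eq_zero_of_mul_add_pow_eq_zero h ht htQ hu (by simpa only [hσ] using hδ)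
    simp_rw [hσ, ← pow_succ] at hmul
    rw [sq]
    nth_rw 2 [← weilSum_add_one_neg h]
    rw [weilSum, weilSum, hmul, h, Nat.cast_pow]
  obtain ⟨w, hw, hsum⟩ := exists_isIntegral_weilSum_eq (ψ := ψ)
    (dvd_of_mul_right_dvd (add_one_mul_sub_one_dvd_card_units h)) (t * u)
  exact eq_neg_pow_of_sq_eq (one_lt_of_card_eq_pow h) hsq hw hsum

lemma weilSum_of_dvd_add_one (hψ : ψ.IsPrimitive) (hψσ : ∀ (σ : F ≃+* F) x, ψ (σ x) = ψ x)
    (h : Fintype.card F = Q ^ (2 * s)) {t : F} (ht : t ≠ 0) (htQ : t ^ Q = -t) {m : ℕ}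
    (hm : m ∣ Q + 1) : weilSum ψ m t = (1 - m) * (-Q) ^ s :=
  weilSum_of_forall_not_pow hψ ht (dvd_of_mul_right_dvd (add_one_mul_sub_one_dvd_card_units h))
    (fun _ ↦ weilSum_add_one_of_not_pow hψ hψσ h ht htQ) hm

lemma card_filter_pow_eq_neg [DecidableEq F] (h : Fintype.card F = Q ^ (2 * s)) :
    #{u : Fˣ | (u : F) ^ Q = -u} = Q - 1 := by
  have hdvd := add_one_mul_sub_one_dvd_card_units h
  have hone : (-1 : Fˣ) ^ (Q + 1) = 1 := by
    rw [pow_succ, neg_one_pow_eq_neg_one_of_card h, neg_mul_neg, one_mul]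
  obtain ⟨z, hz⟩ := exists_pow_eq_of_pow_eq_one (by rwa [mul_comm]) hone
  rw [← card_filter_pow_eq_pow (dvd_of_mul_left_dvd hdvd) z, hz]
  refine congrArg card (filter_congr fun u _ ↦ ?_)
  rw [← mul_left_inj u, pow_sub_one_mul (one_lt_of_card_eq_pow h).ne_bot, neg_one_mul,
    Units.ext_iff, Units.val_pow_eq_pow_val, Units.val_neg]

end Frobenius

end Field

theorem stmt_17_general (Q s m : ℕ) (hm : m ∣ Q + 1) (F : Type*) [Field F] [Fintype F]
    (hF : Fintype.card F = Q ^ (2 * s)) :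
    (Set.ncard {p : F × F | p.2 ^ m = p.1 ^ Q + p.1} : ℤ) =
      Q ^ (2 * s) - (m - 1) * (Q - 1) * (-Q) ^ s := by
  classical
  obtain ⟨ψ, hψ, hψσ⟩ := exists_addChar_isPrimitive_forall_map_eq F
  obtain ⟨σ, hσ⟩ := exists_ringEquiv_forall_eq_pow hF
  have hQ := one_lt_of_card_eq_pow hF
  have hcount := card_filter_pow_eq_map_add hψ σ (hψσ σ) m
  have hunits (u : Fˣ) : (if (u : F) ^ Q = -u then weilSum ψ m (u : F) else 0) =
      if (u : F) ^ Q = -u then (1 - m) * (-Q : ℂ) ^ s else 0 := by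
    split_ifs with hu
    exacts [weilSum_of_dvd_add_one hψ hψσ hF u.ne_zero hu hm, rfl]
  simp_rw [hσ, sum_filter] at hcount
  rw [sum_eq_add_sum_units, if_pos (by rw [zero_pow hQ.ne_bot, neg_zero]), weilSum_zero_right, hF]
    at hcount
  simp_rw [hunits] at hcount
  rw [← sum_filter, sum_const, card_filter_pow_eq_neg hF, nsmul_eq_mul, Nat.cast_pred hQ.pos]
    at hcount
  rw [Set.ncard_eq_toFinset_card', Set.toFinset_ofPred]
  refine Int.cast_injective (α := ℂ) ?_
  push_cast at hcount ⊢
  rw [hcount]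
  ring

/-- Let `Q` be a prime power, `b` a positive divisor of `Q+1`,
`s` an odd positive integer, and `q = Q^(2s)`. Then
`|{(α, β) ∈ F_q × F_q : β^((Q+1)/b) = α^Q + α}| = q + ((Q+1)/b - 1)(Q-1)Q^s`,
i.e. the superelliptic curve `y^((Q+1)/b) = x^Q + x` is maximal over `F_q`. -/
theorem stmt_17 (Q : ℕ) (hQ : IsPrimePow Q)
    (b : ℕ) (hb : 0 < b) (hbdvd : b ∣ Q + 1)
    (s : ℕ) (hs : 0 < s) (hsodd : Odd s)
    (q : ℕ) (hq : q = Q ^ (2 * s))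
    (F : Type*) [Field F] [Fintype F] (hF : Fintype.card F = q) :
    Set.ncard {p : F × F | p.2 ^ ((Q + 1) / b) = p.1 ^ Q + p.1} =
      q + ((Q + 1) / b - 1) * (Q - 1) * Q ^ s := by
  have hm : (Q + 1) / b ∣ Q + 1 := Nat.div_dvd_of_dvd hbdvd
  generalize (Q + 1) / b = m at hm ⊢
  zify [Nat.pos_of_dvd_of_pos hm Q.succ_pos, hQ.one_lt.le]
  rw [stmt_17_general Q s m hm F (hF.trans hq), hsodd.neg_pow, hq, Nat.cast_pow]
  ring
end
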